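/- Let M be a λ-term. If there exists a ∈ T_r(M) such that a is positive and a is a →_r-normal form, then M is a β-normal form. -/

import Mathlib

/-! Ordinary λ-terms, in de Bruijn notation. -/
inductive Lam : Type
  | var : ℕ → Lam
  | lam : Lam → Lam
  | app : Lam → Lam → Lam
  deriving DecidableEq

namespace Lam

/-- Shift the free indices `≥ d` up by one. -/
def lift (d : ℕ) : Lam → Lam
  | var n => if n < d then var n else var (n + 1)
  | lam M => lam (lift (d + 1) M)
  | app P Q => app (lift d P) (lift d Q)

/-- Capture-avoiding substitution of `N` for the free variable `k`. -/
def subst : Lam → ℕ → Lam → Lam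
  | var n, k, N => if n = k then N else if k < n then var (n - 1) else var n
  | lam M, k, N => lam (subst M (k + 1) (lift 0 N))
  | app P Q, k, N => app (subst P k N) (subst Q k N)

/-- Number of free occurrences of the variable `k`. -/
def count (k : ℕ) : Lam → ℕ
  | var n => if n = k then 1 else 0
  | lam M => count (k + 1) M
  | app P Q => count k P + count k Q

/-- One-step β-reduction. -/
inductive Beta : Lam → Lam → Prop
  | beta (M N : Lam) : Beta (app (lam M) N) (subst M 0 N)
  | lam {M M'} : Beta M M' → Beta (lam M) (lam M')
  | appL {P P' Q} : Beta P P' → Beta (app P Q) (app P' Q)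
  | appR {P Q Q'} : Beta Q Q' → Beta (app P Q) (app P Q')

/-- The head of the application spine is a variable, with no λ on the spine. -/
def neutral : Lam → Bool
  | var _ => true
  | lam _ => false
  | app P _ => neutral P

/-- Head-normal forms: `λx₁…λxₘ. x N₁ … Nₙ`. -/
def isHNF : Lam → Prop
  | var _ => True
  | lam M => isHNF M
  | app P _ => neutral P = true

/-- The head-reduction function `H`: contracts the head redex, identity on head-normal
forms. -/
def H : Lam → Lam
  | var n => var n
  | lam M => lam (H M)
  | app (lam P) Q => subst P 0 Q
  | app (var n) Q => app (var n) Q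
  | app (app P₁ P₂) Q => app (H (app P₁ P₂)) Q

/-- The left-parallel reduction function `L`: identity on β-normal forms, propagated to
the arguments on head-normal forms, contraction of the head redex otherwise. -/
def L : Lam → Lam
  | var n => var n
  | lam M => lam (L M)
  | app (lam P) Q => subst P 0 Q
  | app (var n) Q => app (var n) (L Q)
  | app (app P₁ P₂) Q =>
      if neutral (app P₁ P₂) then app (L (app P₁ P₂)) (L Q)
      else app (L (app P₁ P₂)) Q

/-- Iterated application `M N₁ … Nₙ`. -/
def mkApps (M : Lam) (Ns : List Lam) : Lam := Ns.foldl app M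

/-- All free variables are `< d`. -/
def ClosedAt (d : ℕ) : Lam → Prop
  | var n => n < d
  | lam M => ClosedAt (d + 1) M
  | app P Q => ClosedAt d P ∧ ClosedAt d Q

/-- `M` is head-normalizable: it β-reduces in finitely many steps to a head-normal form. -/
def HeadNormalizable (M : Lam) : Prop :=
  ∃ N, Relation.ReflTransGen Beta M N ∧ isHNF N

/-- `M` is a β-normal form: it contains no β-redex, i.e. admits no β-step. -/
def BetaNF (M : Lam) : Prop := ¬∃ N, Beta M N

/-- `M` is β-normalizable: it β-reduces in finitely many steps to a β-normal form. -/
def BetaNormalizable (M : Lam) : Prop :=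
  ∃ N, Relation.ReflTransGen Beta M N ∧ BetaNF N

/-- `M` is strongly β-normalizable: no infinite β-reduction sequence starts from `M`. -/
def StronglyNormalizable (M : Lam) : Prop := Acc (fun N M' => Beta M' N) M

end Lam

/-! Rigid resource terms (the nonzero ones), in de Bruijn notation:
`a ::= x | λx.a | ⟨c⟩d⃗` with `d⃗` a list of rigid terms.
The term `0` is represented by `none : Option Rig`. -/
inductive Rig : Type
  | var : ℕ → Rig
  | lam : Rig → Rig
  | app : Rig → List Rig → Rig

namespace Rig

mutual
/-- Number of free occurrences of the variable `k` in a rigid term. -/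
def countR (k : ℕ) : Rig → ℕ
  | var n => if n = k then 1 else 0
  | lam a => countR (k + 1) a
  | app c ds => countR k c + countRList k ds
termination_by a => sizeOf a

def countRList (k : ℕ) : List Rig → ℕ
  | [] => 0
  | d :: ds => countR k d + countRList k ds
termination_by ds => sizeOf ds
end

mutual
/-- Shift the free indices `≥ d` up by one. -/
def liftR (d : ℕ) : Rig → Rig
  | var n => if n < d then var n else var (n + 1)
  | lam a => lam (liftR (d + 1) a)
  | app c ds => app (liftR d c) (liftRList d ds)
termination_by a => sizeOf a

def liftRList (d : ℕ) : List Rig → List Rig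
  | [] => []
  | a :: as => liftR d a :: liftRList d as
termination_by as => sizeOf as
end

mutual
/-- Rigid substitution `a[b⃗/k]`: the list `b⃗` is distributed, in order, over the
free occurrences of the variable `k`; the result is `none` (i.e. `0`) when
`|b⃗| ≠ n_k(a)`. -/
def rsubst (k : ℕ) : Rig → List Rig → Option Rig
  | var n, bs =>
      if n = k then (match bs with | [b] => some b | _ => none)
      else (match bs with
            | [] => some (if k < n then var (n - 1) else var n)
            | _ => none)
  | lam a, bs => (rsubst (k + 1) a (liftRList 0 bs)).map lam
  | app c ds, bs =>
      match rsubst k c (bs.take (countR k c)), rsubstList k ds (bs.drop (countR k c)) with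
      | some c', some ds' => some (app c' ds')
      | _, _ => none
termination_by a _ => sizeOf a

def rsubstList (k : ℕ) : List Rig → List Rig → Option (List Rig)
  | [], bs => if bs.isEmpty then some [] else none
  | d :: ds, bs =>
      match rsubst k d (bs.take (countR k d)), rsubstList k ds (bs.drop (countR k d)) with
      | some d', some ds' => some (d' :: ds')
      | _, _ => none
termination_by ds _ => sizeOf ds
end

/-- One-step rigid resource reduction `→_r` (contextual closure of
`⟨λx.a⟩b⃗ →_r a[b⃗/x]`); the result may be `0` (i.e. `none`), which annihilates
the surrounding context. -/
inductive RStep : Rig → Option Rig → Prop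
  | beta (a : Rig) (bs : List Rig) : RStep (app (lam a) bs) (rsubst 0 a bs)
  | lam {a r} : RStep a r → RStep (lam a) (r.map lam)
  | head {c r} (ds : List Rig) : RStep c r → RStep (app c ds) (r.map (fun c' => app c' ds))
  | arg {d r} (c : Rig) (ds₁ ds₂ : List Rig) :
      RStep d r → RStep (app c (ds₁ ++ d :: ds₂)) (r.map (fun d' => app c (ds₁ ++ d' :: ds₂)))

/-- `→_r` on rigid terms extended with `0`; `0` is inert. -/
inductive RStepO : Option Rig → Option Rig → Prop
  | mk {a r} : RStep a r → RStepO (some a) r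

/-- `r` is a `→_r`-normal form (`0` is one). -/
def RNormal (r : Option Rig) : Prop := ¬∃ r', RStepO r r'

/-- The head of the application spine is a variable, with no λ on the spine. -/
def rNeutral : Rig → Bool
  | var _ => true
  | lam _ => false
  | app c _ => rNeutral c

/-- Rigid head-normal forms among nonzero terms: `λx₁…λxₘ.⟨…⟨x⟩d⃗₁…⟩d⃗ₙ`
(the term `0` is a head-normal form, but it is treated separately). -/
def rIsHNF : Rig → Prop
  | var _ => True
  | lam a => rIsHNF a
  | app c _ => rNeutral c = true

/-- The rigid head-reduction function `H_r`: contracts the head redex, identity on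
head-normal forms; the result may be `0` (i.e. `none`). -/
def Hr : Rig → Option Rig
  | var n => some (var n)
  | lam a => (Hr a).map lam
  | app (lam a) bs => rsubst 0 a bs
  | app (var n) ds => some (app (var n) ds)
  | app (app c₁ c₂) ds => (Hr (app c₁ c₂)).map (fun c' => app c' ds)

/-- `H_r` extended to terms-or-`0`. -/
def HrO : Option Rig → Option Rig := fun r => r.bind Hr

mutual
/-- The rigid left-parallel reduction function `L_r`: identity on `→_r`-normal forms,
applied componentwise to the argument lists on head-normal forms, contraction of the
head redex otherwise; the result may be `0` (i.e. `none`). -/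
def Lr : Rig → Option Rig
  | var n => some (var n)
  | lam a => (Lr a).map lam
  | app (lam a) bs => rsubst 0 a bs
  | app (var n) ds => (LrList ds).map (fun ds' => app (var n) ds')
  | app (app c₁ c₂) ds =>
      if rNeutral (app c₁ c₂) then
        match Lr (app c₁ c₂), LrList ds with
        | some c', some ds' => some (app c' ds')
        | _, _ => none
      else (Lr (app c₁ c₂)).map (fun c' => app c' ds)
termination_by a => sizeOf a

def LrList : List Rig → Option (List Rig)
  | [] => some []
  | d :: ds =>
      match Lr d, LrList ds with
      | some d', some ds' => some (d' :: ds')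
      | _, _ => none
termination_by ds => sizeOf ds
end

/-- `L_r` extended to terms-or-`0`. -/
def LrO : Option Rig → Option Rig := fun r => r.bind Lr

/-- Positive resource terms: no empty list/multiset occurs as the argument of an
application. -/
inductive rPositive : Rig → Prop
  | var (n : ℕ) : rPositive (var n)
  | lam {a} : rPositive a → rPositive (lam a)
  | app {c : Rig} {ds : List Rig} :
      rPositive c → ds ≠ [] → (∀ d ∈ ds, rPositive d) → rPositive (app c ds)

end Rig

/-- The rigid expansion `T_r(M)` of a λ-term (equivalently, the support of its Taylor
expansion, with multisets presented by lists: `Texp M` is closed under permutation of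
argument lists). -/
def Texp : Lam → Set Rig
  | Lam.var n => {Rig.var n}
  | Lam.lam M => {a | ∃ b ∈ Texp M, a = Rig.lam b}
  | Lam.app P Q => {a | ∃ c ∈ Texp P, ∃ ds : List Rig, (∀ d ∈ ds, d ∈ Texp Q) ∧ a = Rig.app c ds}

namespace Rig

/-- The support of the `n`-linear substitution `∂_k a · b̄`, where the multiset `b̄` is
presented by the list `bs`: the finite formal sum (multiset) of all nonzero results of
rigid substitutions along bijective assignments, i.e. permutations of `bs`. -/
def permSubst (k : ℕ) (a : Rig) (bs : List Rig) : Multiset Rig :=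
  ↑(bs.permutations.filterMap (fun bs' => rsubst k a bs'))

/-- One step of non-erasing ε-resource reduction `→^{¬e}_{∂ε}` out of a single resource
term, producing a finite formal sum (a multiset) of resource terms: non-erasing resource
β-steps `⟨λx.a⟩b̄ → ∂_x a · b̄` (with `x ∈ FV(a)`) and resource σ₁-steps, under any
context. -/
inductive NEStep : Rig → Multiset Rig → Prop
  | beta {a : Rig} (bs : List Rig) :
      0 < countR 0 a → NEStep (app (lam a) bs) (permSubst 0 a bs)
  | sigma (a : Rig) (ts qs : List Rig) :
      NEStep (app (app (lam a) ts) qs) {app (lam (app a (liftRList 0 qs))) ts}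
  | lam {a σ} : NEStep a σ → NEStep (lam a) (σ.map lam)
  | head {c σ} (ds : List Rig) : NEStep c σ → NEStep (app c ds) (σ.map (fun c' => app c' ds))
  | arg {d σ} (c : Rig) (ds₁ ds₂ : List Rig) :
      NEStep d σ → NEStep (app c (ds₁ ++ d :: ds₂)) (σ.map (fun d' => app c (ds₁ ++ d' :: ds₂)))

/-- Non-erasing ε-resource reduction on finite formal sums, extended by linearity. -/
def NEStepSum (σ τ : Multiset Rig) : Prop :=
  ∃ (a : Rig) (ρ υ : Multiset Rig), σ = a ::ₘ ρ ∧ NEStep a υ ∧ τ = υ + ρ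

/-- `σ` is a `→^{¬e}_{∂ε}`-normal form. -/
def NENormal (σ : Multiset Rig) : Prop := ¬∃ τ, NEStepSum σ τ

end Rig

/-- One step of non-erasing ε-reduction on λ-terms: non-erasing β-steps
`(λx.M)N → M[N/x]` (with `x ∈ FV(M)`) together with σ₁-steps
`((λx.M)N)P → (λx.MP)N` (`x ∉ FV(P)`), under any context. -/
inductive NEeps : Lam → Lam → Prop
  | beta {M : Lam} (N : Lam) :
      0 < Lam.count 0 M → NEeps (Lam.app (Lam.lam M) N) (Lam.subst M 0 N)
  | sigma (M N P : Lam) :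
      NEeps (Lam.app (Lam.app (Lam.lam M) N) P)
        (Lam.app (Lam.lam (Lam.app M (Lam.lift 0 P))) N)
  | lam {M M'} : NEeps M M' → NEeps (Lam.lam M) (Lam.lam M')
  | appL {P P' Q} : NEeps P P' → NEeps (Lam.app P Q) (Lam.app P' Q)
  | appR {P Q Q'} : NEeps Q Q' → NEeps (Lam.app P Q) (Lam.app P Q')

/-- The set `S` of λ-terms. -/
inductive SLam : Lam → Prop
  | varApp (n : ℕ) (Ms : List Lam) :
      (∀ M ∈ Ms, SLam M) → SLam (Lam.mkApps (Lam.var n) Ms)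
  | lam {M} : SLam M → SLam (Lam.lam M)
  | redex (M₀ M₁ : Lam) (Ms : List Lam) :
      SLam M₁ → SLam (Lam.mkApps (Lam.subst M₀ 0 M₁) Ms) →
      SLam (Lam.mkApps (Lam.app (Lam.lam M₀) M₁) Ms)

/-- λI-terms: every abstraction binds a variable occurring free in its body. -/
def LamI : Lam → Prop
  | Lam.var _ => True
  | Lam.lam M => LamI M ∧ 0 < Lam.count 0 M
  | Lam.app P Q => LamI P ∧ LamI Q

/-! An approximant of `M` copies the abstractions and the function positions of `M`, so it can hide
a β-redex of `M` only by approximating an argument by the empty list. Positivity forbids this: every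
β-step of `M` forces a step, possibly to `0`, in each positive approximant of `M`. -/

theorem Rig.RStep.exists_app_of_mem {d : Rig} {r : Option Rig} {ds : List Rig} (c : Rig)
    (h : RStep d r) (hd : d ∈ ds) : ∃ r', RStep (app c ds) r' := by
  obtain ⟨ds₁, ds₂, rfl⟩ := List.append_of_mem hd
  exact ⟨_, RStep.arg c ds₁ ds₂ h⟩

theorem Rig.rPositive.exists_of_mem_Texp_lam {M : Lam} {a : Rig} (hpos : rPositive a)
    (ha : a ∈ Texp (Lam.lam M)) : ∃ b ∈ Texp M, rPositive b ∧ a = Rig.lam b := by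
  obtain ⟨b, hb, rfl⟩ := ha
  cases hpos with
  | lam hbpos => exact ⟨b, hb, hbpos, rfl⟩

theorem Rig.rPositive.exists_of_mem_Texp_app {P Q : Lam} {a : Rig} (hpos : rPositive a)
    (ha : a ∈ Texp (Lam.app P Q)) :
    ∃ c ∈ Texp P, rPositive c ∧ ∃ ds, a = Rig.app c ds ∧ ∃ d ∈ ds, d ∈ Texp Q ∧ rPositive d := by
  obtain ⟨c, hc, ds, hds, rfl⟩ := ha
  cases hpos with
  | app hcpos hne hdspos =>
    obtain ⟨d, hd⟩ := List.exists_mem_of_ne_nil ds hne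
    exact ⟨c, hc, hcpos, ds, rfl, d, hd, hds d hd, hdspos d hd⟩

theorem Lam.Beta.exists_rStep_of_mem_Texp {M N : Lam} {a : Rig} (hMN : Beta M N)
    (ha : a ∈ Texp M) (hpos : Rig.rPositive a) : ∃ r, Rig.RStep a r := by
  induction hMN generalizing a with
  | beta M N =>
    obtain ⟨_, ⟨b, -, rfl⟩, ds, -, rfl⟩ := ha
    exact ⟨_, Rig.RStep.beta b ds⟩
  | lam _ ih =>
    obtain ⟨b, hb, hbpos, rfl⟩ := hpos.exists_of_mem_Texp_lam ha
    obtain ⟨_, hstep⟩ := ih hb hbpos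
    exact ⟨_, hstep.lam⟩
  | appL _ ih =>
    obtain ⟨c, hc, hcpos, ds, rfl, -⟩ := hpos.exists_of_mem_Texp_app ha
    obtain ⟨_, hstep⟩ := ih hc hcpos
    exact ⟨_, hstep.head ds⟩
  | appR _ ih =>
    obtain ⟨c, -, -, ds, rfl, d, hd, hdQ, hdpos⟩ := hpos.exists_of_mem_Texp_app ha
    obtain ⟨_, hstep⟩ := ih hdQ hdpos
    exact hstep.exists_app_of_mem c hd

/-- if some `a ∈ T_r(M)` is positive and a `→_r`-normal form, then `M` is
a β-normal form. -/
theorem betaNF_of_positive_normal_approximant {M : Lam}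
    (h : ∃ a ∈ Texp M, Rig.rPositive a ∧ ¬∃ r, Rig.RStep a r) :
    Lam.BetaNF M := by
  obtain ⟨a, ha, hpos, hnormal⟩ := h
  rintro ⟨N, hMN⟩
  exact hnormal (hMN.exists_rStep_of_mem_Texp ha hpos)
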